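/- Let d, N be positive integers, C > 0 a real constant, and for each k = 1,…,N let Ψ*_k ∈ ℝ^d be a fixed vector and c_k ∈ ℝ a constant (corresponding to the potential vector Ψ(x_k, f_k) = c_k·𝟙 of a non-ideal segmentation, all of whose entries are equal to c_k). Consider the two-class structured SVM problem (2CSSVM with margin Δ_k = 1): minimize F(w, ξ) = (1/2)‖w‖² + (C/N)·∑_{k=1}^N ξ_k over (w, ξ) ∈ ℝ^d × ℝ^N subject to, for all k, w · (c_k·𝟙 − Ψ*_k) ≥ 1 − ξ_k, together with ∑_{i=1}^d w_i = 1 and w_i ≥ 0 for all i. Consider also the one-class structured SVM problem (OSSVM): minimize G(w, ε) = (1/2)‖w‖² + (C/N)·∑_{k=1}^N ε_k over (w, ε) ∈ ℝ^d × ℝ^N subject to, for all k, w · Ψ*_k ≤ −1 + ε_k, together with ∑_{i=1}^d w_i = 1 and w_i ≥ 0 for all i. Then the map T(w, ξ) = (w, (ξ_k + c_k)_{k=1}^N) is a bijection from the feasible set of the 2CSSVM problem onto the feasible set of the OSSVM problem satisfying G(T(w, ξ)) = F(w, ξ) + (C/N)·∑_{k=1}^N c_k; consequently (w, ξ) is a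 global minimizer of the 2CSSVM problem if and only if T(w, ξ) is a global minimizer of the OSSVM problem, and in particular the two problems have exactly the same set of optimal weight vectors w. -/

import Mathlib

/-!
Since the weights sum to `1`, `w · (c k • 𝟙) = c k`, so the 2CSSVM constraint
`w · (c k • 𝟙 - Ψ* k) ≥ 1 - ξ k` is the OSSVM constraint with slack `ξ k + c k`. Hence the
translation `T` of the slacks, which is a bijection of the ambient space, satisfies
`p ∈ A ↔ T p ∈ B`, and it changes the objective by the constant `(C / N) * ∑ k, c k`. Everything
about minimizers follows by transport along `T`, which leaves `w` unchanged.
-/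

/-- Theorem 1 of the paper (conditional equivalence of 2CSSVM and OSSVM):
under Δ_k = 1 and constant non-ideal potential vectors Ψ(x_k, f_k) = c_k·𝟙,
the slack shift T(w, ξ) = (w, ξ + c) is a bijection from the 2CSSVM feasible
set onto the OSSVM feasible set, shifts the objective by the constant
(C/N)·∑_k c_k, preserves global minimizers, and hence both problems have
the same set of optimal weight vectors. -/
theorem stmt_0 (d N : ℕ) (hd : 0 < d) (hN : 0 < N) (C : ℝ) (hC : 0 < C)
    (Ψstar : Fin N → Fin d → ℝ) (c : Fin N → ℝ)
    (dot : (Fin d → ℝ) → (Fin d → ℝ) → ℝ)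
    (hdot : ∀ u v, dot u v = ∑ i, u i * v i)
    (F G : (Fin d → ℝ) × (Fin N → ℝ) → ℝ)
    (hF : ∀ p, F p = (1 / 2) * (∑ i, (p.1 i) ^ 2) + (C / N) * ∑ k, p.2 k)
    (hG : ∀ p, G p = (1 / 2) * (∑ i, (p.1 i) ^ 2) + (C / N) * ∑ k, p.2 k)
    (A B : Set ((Fin d → ℝ) × (Fin N → ℝ)))
    (hA : A = {p | (∀ k, dot p.1 (fun i => c k * 1 - Ψstar k i) ≥ 1 - p.2 k) ∧
                   (∑ i, p.1 i) = 1 ∧ (∀ i, 0 ≤ p.1 i)})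
    (hB : B = {p | (∀ k, dot p.1 (Ψstar k) ≤ -1 + p.2 k) ∧
                   (∑ i, p.1 i) = 1 ∧ (∀ i, 0 ≤ p.1 i)})
    (T : (Fin d → ℝ) × (Fin N → ℝ) → (Fin d → ℝ) × (Fin N → ℝ))
    (hT : ∀ p, T p = (p.1, fun k => p.2 k + c k)) :
    Set.BijOn T A B ∧
    (∀ p ∈ A, G (T p) = F p + (C / N) * ∑ k, c k) ∧
    (∀ p ∈ A, ((∀ q ∈ A, F p ≤ F q) ↔ (∀ q ∈ B, G (T p) ≤ G q))) ∧
    {w : Fin d → ℝ | ∃ ξ, (w, ξ) ∈ A ∧ ∀ q ∈ A, F (w, ξ) ≤ F q} =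
      {w : Fin d → ℝ | ∃ ε, (w, ε) ∈ B ∧ ∀ q ∈ B, G (w, ε) ≤ G q} := by
  have hmem : ∀ p, T p ∈ B ↔ p ∈ A := by
    intro p
    rw [hT, hA, hB]
    simp only [Set.mem_setOf_eq]
    refine and_congr_left fun hw => forall_congr' fun k => ?_
    -- The normalization of `w` turns the constant potential into the number `c k`.
    have key : dot p.1 (fun i => c k * 1 - Ψstar k i) = c k - dot p.1 (Ψstar k) := by
      simp only [hdot, mul_one, mul_sub, Finset.sum_sub_distrib, ← Finset.sum_mul, hw.1, one_mul]
    rw [key]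
    constructor <;> intro h <;> linarith
  have hsurj : ∀ q, T (q.1, fun k => q.2 k - c k) = q := by
    intro q
    simp [hT]
  have hinj : Function.Injective T := by
    intro p q h
    simp only [hT, Prod.mk.injEq, funext_iff, add_left_inj] at h
    exact Prod.ext (funext h.1) (funext h.2)
  have hval : ∀ p, G (T p) = F p + (C / N) * ∑ k, c k := by
    intro p
    simp only [hG, hF, hT, Finset.sum_add_distrib]
    ring
  have hmin : ∀ p, (∀ q ∈ A, F p ≤ F q) ↔ (∀ q ∈ B, G (T p) ≤ G q) := by
    intro p
    constructor
    · intro h q hq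
      rw [← hsurj q] at hq ⊢
      rw [hval, hval]
      exact add_le_add_left (h _ ((hmem _).1 hq)) _
    · intro h q hq
      have := h _ ((hmem q).2 hq)
      rw [hval, hval] at this
      exact le_of_add_le_add_right this
  refine ⟨⟨fun p hp => (hmem p).2 hp, hinj.injOn, fun q hq => ?_⟩,
    fun p _ => hval p, fun p _ => hmin p, ?_⟩
  · exact ⟨_, (hmem _).1 ((hsurj q).symm ▸ hq), hsurj q⟩
  · ext w
    constructor
    · rintro ⟨ξ, hξ, h⟩
      have hB' := (hmem _).2 hξ
      have h' := (hmin _).1 h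
      rw [hT] at hB' h'
      exact ⟨_, hB', h'⟩
    · rintro ⟨ε, hε, h⟩
      rw [← hsurj (w, ε)] at hε h
      exact ⟨_, (hmem _).1 hε, (hmin _).2 h⟩
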